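/- arXiv:1211.3702 — 2 statements merged into one kernel-verified Lean document; each statement's English description precedes it below -/
import Mathlib

section
/- (Lecture Hall Theorem) For every n ≥ 1 and every m ≥ 0, the number of lecture hall partitions λ = (λ₁, ..., λₙ) with λ₁ + ... + λₙ = m equals the number of partitions of m into odd parts each at most 2n-1. -/
namespace LectureHall

/-- smallest admissible value at position `i` given the value at position `i - 1` -/
def lo (a : ℕ → ℤ) (i : ℕ) : ℤ := a (i - 1) - (-a (i - 1)) / ((i - 1 : ℕ) : ℤ)

/-- largest admissible value at position `i` given the value at position `i + 1` -/
def hi (a : ℕ → ℤ) (i : ℕ) : ℤ := a (i + 1) + (-a (i + 1)) / ((i + 1 : ℕ) : ℤ)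

def C (a : ℕ → ℤ) (i : ℕ) : Prop := ((i : ℤ) + 1) * a i ≤ i * a (i + 1)

def LH (n : ℕ) (a : ℕ → ℤ) : Prop :=
  (∀ i, 0 ≤ a i) ∧ (∀ i, n < i → a i = 0) ∧ a 0 = 0 ∧ ∀ i, i < n → C a i

/-- reflection of the positions of parity different from `n` -/
def rf (n : ℕ) (a : ℕ → ℤ) (i : ℕ) : ℤ :=
  if n < i then 0 else if i % 2 = n % 2 then a i else lo a i + hi a i - a i

def ext (n : ℕ) (a : ℕ → ℤ) (k : ℕ) (i : ℕ) : ℤ :=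
  if i = n + 1 then lo a (n + 1) + k else rf n a i

/-- `G a m = a (m-1) + a (m-3) + ...` -/
def G (a : ℕ → ℤ) : ℕ → ℤ
  | 0 => 0
  | 1 => a 0
  | m + 2 => a (m + 1) + G a m

lemma C_iff_lo (a : ℕ → ℤ) (i : ℕ) (h : 1 ≤ i) : C a i ↔ lo a (i + 1) ≤ a (i + 1) := by
  have hd : (0 : ℤ) < i := by exact_mod_cast h
  unfold C lo
  simp only [Nat.add_sub_cancel]
  have := Int.le_ediv_iff_mul_le (a := a i - a (i + 1)) (b := -a i) hd
  constructor
  · intro h1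
    have := this.2 (by linarith)
    linarith
  · intro h1
    have := this.1 (by linarith)
    linarith

lemma C_iff_hi (a : ℕ → ℤ) (i : ℕ) : C a i ↔ a i ≤ hi a i := by
  have hd : (0 : ℤ) < ((i + 1 : ℕ) : ℤ) := by positivity
  unfold C hi
  have := Int.le_ediv_iff_mul_le (a := a i - a (i + 1)) (b := -a (i + 1)) hd
  push_cast at this ⊢
  constructor
  · intro h1
    have := this.2 (by linarith)
    linarith
  · intro h1
    have := this.1 (by linarith)
    linarith

lemma lo_nonneg (a : ℕ → ℤ) (h : ∀ i, 0 ≤ a i) (i : ℕ) : 0 ≤ lo a i := by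
  unfold lo
  have h1 := h (i - 1)
  have : (-a (i - 1)) / ((i - 1 : ℕ) : ℤ) ≤ 0 := by
    rcases Nat.eq_zero_or_pos (i - 1) with hz | hp
    · simp [hz]
    · exact Int.ediv_nonpos_of_nonpos_of_neg (by linarith) (by exact_mod_cast hp)
  linarith

lemma lo_one (a : ℕ → ℤ) (h : a 0 = 0) : lo a 1 = 0 := by simp [lo, h]
lemma lo_zero (a : ℕ → ℤ) (h : a 0 = 0) : lo a 0 = 0 := by simp [lo, h]
lemma hi_zero (a : ℕ → ℤ) : hi a 0 = 0 := by simp [hi]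

lemma lo_le {n : ℕ} {a : ℕ → ℤ} (h : LH n a) (i : ℕ) (hi : i ≤ n) : lo a i ≤ a i := by
  obtain ⟨h0, h1, h2, h3⟩ := h
  match i with
  | 0 => rw [lo_zero a h2, h2]
  | 1 => rw [lo_one a h2]; exact h0 1
  | j + 2 => exact (C_iff_lo a (j + 1) (by omega)).1 (h3 _ (by omega))

lemma le_hi {n : ℕ} {a : ℕ → ℤ} (h : LH n a) (i : ℕ) (hi : i < n) : a i ≤ LectureHall.hi a i :=
  (C_iff_hi a i).1 (h.2.2.2 i hi)

lemma lo_congr {a b : ℕ → ℤ} {i : ℕ} (h : a (i - 1) = b (i - 1)) : lo a i = lo b i := by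
  simp [lo, h]
lemma hi_congr {a b : ℕ → ℤ} {i : ℕ} (h : a (i + 1) = b (i + 1)) : hi a i = hi b i := by
  simp [hi, h]

lemma rf_same {n : ℕ} (a : ℕ → ℤ) {i : ℕ} (h : i ≤ n) (h2 : i % 2 = n % 2) : rf n a i = a i := by
  simp [rf, not_lt.2 h, h2]
lemma rf_diff {n : ℕ} (a : ℕ → ℤ) {i : ℕ} (h : i ≤ n) (h2 : ¬ i % 2 = n % 2) :
    rf n a i = lo a i + hi a i - a i := by
  simp [rf, not_lt.2 h, h2]
lemma rf_gt {n : ℕ} (a : ℕ → ℤ) {i : ℕ} (h : n < i) : rf n a i = 0 := by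
  simp [rf, h]

lemma rf_zero {n : ℕ} (a : ℕ → ℤ) (h : a 0 = 0) : rf n a 0 = 0 := by
  simp [rf, h, lo_zero a h, hi_zero]

lemma lo_rf {n : ℕ} (a : ℕ → ℤ) (h : a 0 = 0) {i : ℕ} (h1 : i ≤ n + 1)
    (h2 : ¬ i % 2 = n % 2) : lo (rf n a) i = lo a i := by
  rcases Nat.eq_zero_or_pos i with rfl | hp
  · rw [lo_zero _ h, lo_zero _ (rf_zero a h)]
  · exact lo_congr (rf_same a (by omega) (by omega))

lemma hi_rf {n : ℕ} (a : ℕ → ℤ) {i : ℕ} (h1 : i < n)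
    (h2 : ¬ i % 2 = n % 2) : hi (rf n a) i = hi a i :=
  hi_congr (rf_same a (by omega) (by omega))

lemma rf_congr {n : ℕ} {a b : ℕ → ℤ} (h : ∀ i ≤ n, a i = b i) : rf n a = rf n b := by
  funext i
  unfold rf
  split_ifs with h1 h2
  · rfl
  · exact h i (by omega)
  · rw [h i (by omega), lo_congr (h (i - 1) (by omega)), hi_congr (h (i + 1) (by omega))]

lemma rf_rf {n : ℕ} (a : ℕ → ℤ) (h : a 0 = 0) {i : ℕ} (h1 : i ≤ n) : rf n (rf n a) i = a i := by
  by_cases h2 : i % 2 = n % 2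
  · rw [rf_same _ h1 h2, rf_same _ h1 h2]
  · rw [rf_diff _ h1 h2, rf_diff _ h1 h2, lo_rf a h (by omega) h2, hi_rf a (by grind) h2]
    ring

lemma LH_rf {n : ℕ} {a : ℕ → ℤ} {N : ℕ} (hN : n ≤ N) (h : LH N a) : LH n (rf n a) := by
  have z := h.2.2.1
  refine ⟨?_, fun i hi => rf_gt a hi, rf_zero a z, ?_⟩
  · intro i
    by_cases h1 : n < i
    · rw [rf_gt a h1]
    by_cases h2 : i % 2 = n % 2
    · rw [rf_same a (by omega) h2]; exact h.1 i
    · rw [rf_diff a (by omega) h2]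
      have := le_hi h i (by grind)
      have := lo_nonneg a h.1 i
      linarith
  · intro i hi'
    by_cases h2 : i % 2 = n % 2
    · rcases Nat.eq_zero_or_pos i with rfl | hp
      · simp [C, rf_zero a z]
      · rw [C_iff_lo _ _ hp, lo_rf a z (by omega) (by omega), rf_diff a (by omega) (by omega)]
        have := le_hi h (i + 1) (by grind)
        linarith
    · rw [C_iff_hi, hi_rf a hi' h2, rf_diff a (by omega) h2]
      have := lo_le h i (by omega)
      linarith

lemma ext_le {n : ℕ} (a : ℕ → ℤ) (k : ℕ) {i : ℕ} (h : i ≤ n) : ext n a k i = rf n a i := by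
  simp [ext, show i ≠ n + 1 by omega]

lemma LH_ext {n : ℕ} {a : ℕ → ℤ} (h : LH n a) (k : ℕ) : LH (n + 1) (ext n a k) := by
  have r := LH_rf le_rfl h
  have z := h.2.2.1
  refine ⟨?_, ?_, ?_, ?_⟩
  · intro i
    unfold ext
    split_ifs
    · have := lo_nonneg a h.1 (n + 1)
      positivity
    · exact r.1 i
  · intro i hi
    simp only [ext, show i ≠ n + 1 by omega, if_false]
    exact r.2.1 i (by omega)
  · rw [ext_le a k (by omega)]; exact r.2.2.1
  · intro i hi
    by_cases h1 : i < n
    · have := r.2.2.2 i h1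
      unfold C at this ⊢
      rwa [ext_le a k (by omega), ext_le a k (by omega)]
    · obtain rfl : i = n := by omega
      rcases Nat.eq_zero_or_pos i with rfl | hp
      · simp [C, ext_le a k le_rfl, rf_zero a z]
      · rw [C_iff_lo _ _ hp, lo_congr (b := a)]
        · simp [ext]
        · simp [ext_le a k le_rfl, rf_same a le_rfl rfl]

/-- the bijection -/
def stepEquiv (n : ℕ) : {a // LH n a} × ℕ ≃ {a // LH (n + 1) a} where
  toFun p := ⟨ext n p.1.1 p.2, LH_ext p.1.2 p.2⟩
  invFun b := (⟨rf n b.1, LH_rf (Nat.le_succ n) b.2⟩, (b.1 (n + 1) - lo b.1 (n + 1)).toNat)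
  left_inv := by
    rintro ⟨⟨a, h⟩, k⟩
    have z := h.2.2.1
    refine Prod.ext (Subtype.ext ?_) ?_
    · funext i
      show rf n (ext n a k) i = a i
      rw [rf_congr (fun i hi => ext_le a k hi)]
      by_cases h1 : i ≤ n
      · exact rf_rf a z h1
      · rw [rf_gt _ (by omega), h.2.1 i (by omega)]
    · show (ext n a k (n + 1) - lo (ext n a k) (n + 1)).toNat = k
      rw [lo_congr (b := a)]
      · simp [ext]
      · simp [ext_le a k le_rfl, rf_same a le_rfl rfl]
  right_inv := by
    rintro ⟨b, h⟩
    have z := h.2.2.1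
    refine Subtype.ext ?_
    funext i
    show ext n (rf n b) (b (n + 1) - lo b (n + 1)).toNat i = b i
    unfold ext
    split_ifs with h1
    · subst h1
      have := lo_le h (n + 1) le_rfl
      rw [lo_rf b z le_rfl (by omega)]
      omega
    · by_cases h2 : i ≤ n
      · exact rf_rf b z h2
      · rw [rf_gt _ (by omega), h.2.1 i (by omega)]

lemma G_congr {a b : ℕ → ℤ} : ∀ m : ℕ, (∀ i < m, ¬ i % 2 = m % 2 → a i = b i) → G a m = G b m
  | 0, _ => rfl
  | 1, h => h 0 (by omega) (by omega)
  | m + 2, h => by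
    simp only [G]
    rw [h (m + 1) (by omega) (by omega), G_congr m (fun i hi h2 => h i (by omega) (by omega))]

lemma G_refl {a b : ℕ → ℤ} (ha : a 0 = 0) (hb : b 0 = 0) :
    ∀ m : ℕ, (∀ i < m, ¬ i % 2 = m % 2 → b i + a i = lo a i + hi a i) →
      G b m + G a m + lo a (m + 1) = 2 * G a (m + 1)
  | 0, _ => by simp [G, ha, lo_one]
  | 1, _ => by simp [G, ha, hb, lo]; ring
  | m + 2, h => by
    have ih := G_refl ha hb m (fun i hi h2 => h i (by omega) (by omega))
    have h1 := h (m + 1) (by omega) (by omega)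
    have h2 : hi a (m + 1) + lo a (m + 3) = 2 * a (m + 2) := by
      simp only [hi, lo, show m + 3 - 1 = m + 2 by omega, show m + 1 + 1 = m + 2 by omega]
      ring
    simp only [G] at *
    linarith

lemma G_ext_even {n : ℕ} {a : ℕ → ℤ} (k : ℕ) :
    G (ext n a k) (n + 1) = G a (n + 1) := by
  refine G_congr _ (fun i hi h2 => ?_)
  rw [ext_le a k (by omega), rf_same a (by omega) (by omega)]

lemma G_ext_odd {n : ℕ} {a : ℕ → ℤ} (h : LH n a) (k : ℕ) :
    G (ext n a k) (n + 2) = 2 * G a (n + 1) - G a n + k := by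
  have := G_refl (b := ext n a k) h.2.2.1 (LH_ext h k).2.2.1 n (fun i hi h2 => by
    rw [ext_le a k (by omega), rf_diff a (by omega) h2]; ring)
  have e : ext n a k (n + 1) = lo a (n + 1) + k := by simp [ext]
  simp only [G]
  rw [e]
  linarith

theorem main (n : ℕ) : ∃ e : {a // LH n a} ≃ (Fin n → ℕ), ∀ a,
    G a.1 (n + 1) = ∑ i : Fin n, ((i : ℕ) + 1 : ℤ) * e a i ∧
    G a.1 n = ∑ i : Fin n, ((i : ℕ) : ℤ) * e a i := by
  induction n with
  | zero =>
    have hz : ∀ a, LH 0 a → a = 0 := fun a h => by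
      funext i
      rcases Nat.eq_zero_or_pos i with rfl | hp
      · exact h.2.2.1
      · exact h.2.1 i hp
    have h0 : LH 0 (0 : ℕ → ℤ) := ⟨by simp, by simp, by simp, by simp⟩
    refine ⟨⟨fun _ => Fin.elim0, fun _ => ⟨0, h0⟩, fun a => Subtype.ext (hz _ a.2).symm,
      fun _ => Subsingleton.elim _ _⟩, fun a => ?_⟩
    simp [G, a.2.2.2.1]
  | succ n ih =>
    obtain ⟨e, he⟩ := ih
    refine ⟨(stepEquiv n).symm.trans ((Equiv.prodComm _ _).trans
      ((Equiv.prodCongr (Equiv.refl ℕ) e).trans (Fin.consEquiv (fun _ => ℕ)))), ?_⟩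
    intro b
    obtain ⟨⟨a, k⟩, rfl⟩ := (stepEquiv n).surjective b
    obtain ⟨h1, h2⟩ := he a
    simp only [Equiv.trans_apply, Equiv.symm_apply_apply, Fin.consEquiv, Equiv.prodComm_apply,
      Equiv.prodCongr_apply, Equiv.coe_fn_mk, Prod.map, Prod.swap, Equiv.refl_apply,
      Fin.sum_univ_succ, Fin.cons_zero, Fin.cons_succ]
    have e1 : ((stepEquiv n) (a, k)).1 = ext n a.1 k := rfl
    rw [e1, G_ext_even, G_ext_odd a.2, h1, h2]
    refine ⟨?_, ?_⟩
    · rw [Finset.mul_sum, ← Finset.sum_sub_distrib, add_comm]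
      congr 1
      · simp
      · refine Finset.sum_congr rfl fun i _ => ?_
        push_cast [Fin.val_succ]; ring
    · simp

lemma G_sum (a : ℕ → ℤ) (n : ℕ) : G a (n + 1) + G a n = ∑ i ∈ Finset.range (n + 1), a i := by
  induction n with
  | zero => simp [G]
  | succ n ih => rw [Finset.sum_range_succ, ← ih]; simp only [G]; ring

/-- finite sequences as integer sequences -/
def toSeq {n : ℕ} (l : Fin n → ℕ) (i : ℕ) : ℤ :=
  if h : 1 ≤ i ∧ i ≤ n then (l ⟨i - 1, by omega⟩ : ℤ) else 0

def IsLH {n : ℕ} (l : Fin n → ℕ) : Prop :=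
  ∀ i j : Fin n, i ≤ j → (l i : ℚ) / ((i : ℕ) + 1) ≤ (l j : ℚ) / ((j : ℕ) + 1)

lemma toSeq_succ {n : ℕ} (l : Fin n → ℕ) (i : ℕ) (h : i < n) : toSeq l (i + 1) = l ⟨i, h⟩ := by
  simp [toSeq, h]

lemma LH_toSeq {n : ℕ} {l : Fin n → ℕ} (h : IsLH l) : LH n (toSeq l) := by
  refine ⟨?_, ?_, ?_, ?_⟩
  · intro i; unfold toSeq; split_ifs <;> positivity
  · intro i hi; simp [toSeq, hi]
  · simp [toSeq]
  · intro i hi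
    rcases i with _ | i
    · simp [C, toSeq]
    · unfold C
      rw [toSeq_succ l i (by omega), toSeq_succ l (i + 1) hi]
      have := h ⟨i, by omega⟩ ⟨i + 1, hi⟩ (by simp)
      rw [div_le_div_iff₀ (by positivity) (by positivity)] at this
      simp only at this
      have h3 : (l ⟨i, by omega⟩ * (i + 1 + 1) : ℕ) ≤ l ⟨i + 1, hi⟩ * (i + 1) := by
        exact_mod_cast this
      zify at h3
      push_cast
      linarith

lemma ratio_le {n : ℕ} {a : ℕ → ℤ} (h : LH n a) (i j : ℕ) (hij : i ≤ j) (hj : j < n) :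
    (a (i + 1) : ℚ) / ((i : ℚ) + 1) ≤ (a (j + 1) : ℚ) / ((j : ℚ) + 1) := by
  induction j, hij using Nat.le_induction with
  | base => exact le_rfl
  | succ j hij ih =>
    refine (ih (by omega)).trans ?_
    have := h.2.2.2 (j + 1) hj
    unfold C at this
    have h2 : ((j : ℚ) + 1 + 1) * a (j + 1) ≤ (j + 1) * a (j + 1 + 1) := by exact_mod_cast this
    rw [div_le_div_iff₀ (by positivity) (by positivity)]
    push_cast
    linarith

def seqEquiv (n : ℕ) : {l : Fin n → ℕ // IsLH l} ≃ {a // LH n a} where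
  toFun l := ⟨toSeq l.1, LH_toSeq l.2⟩
  invFun a := ⟨fun i => (a.1 (i + 1)).toNat, by
    intro i j hij
    have := ratio_le a.2 i j hij j.2
    have e : ∀ i, (((a.1 i).toNat : ℕ) : ℚ) = (a.1 i : ℚ) := fun i => by
      have := Int.toNat_of_nonneg (a.2.1 i)
      exact_mod_cast this
    simp only [e]
    exact this⟩
  left_inv l := by
    refine Subtype.ext (funext fun i => ?_)
    simp [toSeq_succ l.1 i i.2]
  right_inv a := by
    refine Subtype.ext (funext fun i => ?_)
    rcases i with _ | i
    · simp [toSeq, a.2.2.2.1]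
    · by_cases h : i < n
      · simp only [toSeq_succ _ i h]
        exact Int.toNat_of_nonneg (a.2.1 _)
      · simp [toSeq, h, a.2.2.1 (i + 1) (by omega)]

lemma sum_toSeq {n : ℕ} (l : Fin n → ℕ) :
    ∑ i ∈ Finset.range (n + 1), toSeq l i = ((∑ i, l i : ℕ) : ℤ) := by
  rw [Finset.sum_range_succ', Finset.sum_range]
  simp only [toSeq_succ _ _ (Fin.is_lt _)]
  simp [toSeq]

/-- multiset of odd parts with given multiplicities -/
def ms {n : ℕ} (c : Fin n → ℕ) : Multiset ℕ := ∑ i, Multiset.replicate (c i) (2 * (i : ℕ) + 1)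

lemma mem_ms {n : ℕ} {c : Fin n → ℕ} {x : ℕ} (h : x ∈ ms c) : ∃ i : Fin n, x = 2 * (i : ℕ) + 1 := by
  unfold ms at h
  rw [Multiset.mem_sum] at h
  obtain ⟨i, _, hi⟩ := h
  exact ⟨i, Multiset.eq_of_mem_replicate hi⟩

lemma count_ms {n : ℕ} (c : Fin n → ℕ) (i : Fin n) : (ms c).count (2 * (i : ℕ) + 1) = c i := by
  unfold ms
  rw [Multiset.count_sum']
  rw [Finset.sum_eq_single i]
  · simp
  · intro j _ hj
    rw [Multiset.count_replicate, if_neg]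
    intro h
    exact hj (Fin.ext (by omega))
  · simp

lemma sum_ms {n : ℕ} (c : Fin n → ℕ) : (ms c).sum = ∑ i : Fin n, (2 * (i : ℕ) + 1) * c i := by
  unfold ms
  rw [Multiset.sum_sum]
  simp [mul_comm]

lemma ms_count {n : ℕ} (s : Multiset ℕ) (h : ∀ x ∈ s, Odd x ∧ x ≤ 2 * n - 1) :
    ms (fun i : Fin n => s.count (2 * (i : ℕ) + 1)) = s := by
  ext x
  by_cases hx : ∃ i : Fin n, x = 2 * (i : ℕ) + 1
  · obtain ⟨i, rfl⟩ := hx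
    rw [count_ms]
  · rw [Multiset.count_eq_zero_of_notMem (fun h => hx (mem_ms h)),
      Multiset.count_eq_zero_of_notMem]
    intro h2
    obtain ⟨⟨k, hk⟩, h3⟩ := h x h2
    exact hx ⟨⟨k, by omega⟩, hk⟩

def partEquiv (n m : ℕ) : {c : Fin n → ℕ // ∑ i : Fin n, (2 * (i : ℕ) + 1) * c i = m} ≃
    {p : Nat.Partition m // ∀ x ∈ p.parts, Odd x ∧ x ≤ 2 * n - 1} where
  toFun c := ⟨⟨ms c.1, fun {x} h => by obtain ⟨i, rfl⟩ := mem_ms h; omega,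
    by rw [sum_ms]; exact c.2⟩, fun x h => by
      obtain ⟨i, rfl⟩ := mem_ms h
      exact ⟨⟨i, rfl⟩, by omega⟩⟩
  invFun p := ⟨fun i => p.1.parts.count (2 * (i : ℕ) + 1), by
    rw [← sum_ms, ms_count _ p.2, p.1.parts_sum]⟩
  left_inv c := Subtype.ext (funext fun i => count_ms c.1 i)
  right_inv p := Subtype.ext (Nat.Partition.ext (ms_count _ p.2))

end LectureHall

/-- Lecture Hall Theorem: For every `n ≥ 1` and `m ≥ 0`, the number
of lecture hall partitions `λ = (λ₁, …, λₙ)` with `λ₁ + ⋯ + λₙ = m` equals the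
number of partitions of `m` into odd parts each at most `2n - 1`. -/
theorem lecture_hall_theorem (n m : ℕ) (hn : 1 ≤ n) :
    Nat.card {l : Fin n → ℕ //
        (∀ i j : Fin n, i ≤ j → (l i : ℚ) / ((i : ℕ) + 1) ≤ (l j : ℚ) / ((j : ℕ) + 1)) ∧
        ∑ i, l i = m} =
    Nat.card {p : Nat.Partition m // ∀ x ∈ p.parts, Odd x ∧ x ≤ 2 * n - 1} := by
  obtain ⟨e, he⟩ := LectureHall.main n
  refine Nat.card_congr (Equiv.trans ?_ (LectureHall.partEquiv n m))
  refine (Equiv.subtypeSubtypeEquivSubtypeInter (fun l : Fin n → ℕ => LectureHall.IsLH l)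
    (fun l => ∑ i, l i = m)).symm.trans ?_
  refine Equiv.subtypeEquiv ((LectureHall.seqEquiv n).trans e) ?_
  intro l
  obtain ⟨h1, h2⟩ := he (LectureHall.seqEquiv n l)
  have h3 := LectureHall.G_sum (LectureHall.toSeq l.1) n
  rw [LectureHall.sum_toSeq] at h3
  have e1 : (LectureHall.seqEquiv n l).1 = LectureHall.toSeq l.1 := rfl
  rw [e1] at h1 h2
  rw [h1, h2, ← Finset.sum_add_distrib] at h3
  have h4 : ∑ i : Fin n, (2 * (i : ℕ) + 1) * (e (LectureHall.seqEquiv n l)) i = ∑ i, l.1 i := by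
    zify
    push_cast at h3
    rw [← h3]
    refine Finset.sum_congr rfl fun i _ => ?_
    ring
  rw [Equiv.trans_apply, h4]
end

section
/- For every n ≥ 1 and m ≥ 0, the number of lecture hall partitions of length n with sum m equals the number of bounded partitions relative to n with sum m. -/
/-- ceiling division -/
def cd (a i : ℕ) : ℕ := (a + (i - 1)) / i

lemma cd_le_iff (a i b : ℕ) (hi : 0 < i) : cd a i ≤ b ↔ a ≤ i * b := by
  unfold cd
  rw [← Nat.lt_succ_iff, Nat.div_lt_iff_lt_mul hi]
  have : b.succ * i = i * b + i := by rw [Nat.succ_mul, mul_comm]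
  omega

lemma cd_zero (i : ℕ) : cd 0 i = 0 := by
  unfold cd
  rcases Nat.eq_zero_or_pos i with h | h
  · subst h; simp
  · exact Nat.div_eq_of_lt (by omega)

lemma cd_one (a : ℕ) : cd a 1 = a := by simp [cd]

/-- lecture hall sequences, indexed from 1 -/
def LH (n : ℕ) (l : ℕ → ℕ) : Prop :=
  l 0 = 0 ∧ (∀ i < n, l i * (i + 1) ≤ l (i + 1) * i) ∧ ∀ i > n, l i = 0

lemma cond_low (a b i : ℕ) (h0 : i = 0 → a = 0) :
    a * (i + 1) ≤ b * i ↔ a + cd a i ≤ b := by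
  rcases Nat.eq_zero_or_pos i with h | h
  · subst h; rw [h0 rfl]; simp [cd_zero]
  · constructor
    · intro H
      have hab : a ≤ b := by
        by_contra hc
        push Not at hc
        nlinarith
      obtain ⟨k, rfl⟩ := Nat.exists_eq_add_of_le hab
      have := (cd_le_iff a i k h).2 (by nlinarith)
      omega
    · intro H
      obtain ⟨k, hk⟩ := Nat.exists_eq_add_of_le H
      have := (cd_le_iff a i (cd a i) h).1 le_rfl
      subst hk
      nlinarith

lemma cond_up (a b i : ℕ) :
    a * (i + 1) ≤ b * i ↔ a + cd b (i + 1) ≤ b := by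
  constructor
  · intro H
    have hab : a ≤ b := by
      by_contra hc
      push Not at hc
      nlinarith
    obtain ⟨k, rfl⟩ := Nat.exists_eq_add_of_le hab
    have := (cd_le_iff (a + k) (i + 1) k (by omega)).2 (by nlinarith)
    omega
  · intro H
    have := (cd_le_iff b (i + 1) (cd b (i + 1)) (by omega)).1 le_rfl
    nlinarith

/-- reflection of the `j`-th part -/
def rf (l : ℕ → ℕ) (j : ℕ) : ℕ :=
  (l (j - 1) + cd (l (j - 1)) (j - 1)) + (l (j + 1) - cd (l (j + 1)) (j + 1)) - l j

/-- reduce a sequence of length `n+1` to one of length `n` -/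
def dn (n : ℕ) (l : ℕ → ℕ) (j : ℕ) : ℕ :=
  if n < j then 0 else if (n + 1 + j) % 2 = 0 then rf l j else l j

/-- inverse of `dn` -/
def upp (n s : ℕ) (l : ℕ → ℕ) (j : ℕ) : ℕ :=
  if n + 1 < j then 0 else if j = n + 1 then s + l n + cd (l n) n
  else if (n + 1 + j) % 2 = 0 then rf l j else l j

lemma LH.low {n l} (h : LH n l) (i : ℕ) (hi : i < n) : l i + cd (l i) i ≤ l (i + 1) :=
  (cond_low _ _ _ (fun h' => h' ▸ h.1)).1 (h.2.1 i hi)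

lemma LH.up {n l} (h : LH n l) (i : ℕ) (hi : i < n) :
    l i + cd (l (i + 1)) (i + 1) ≤ l (i + 1) :=
  (cond_up _ _ _).1 (h.2.1 i hi)

lemma rf_zero {l : ℕ → ℕ} (h : l 0 = 0) : rf l 0 = 0 := by
  simp [rf, h, cd_zero, cd_one]

lemma rf_succ (l : ℕ → ℕ) (j : ℕ) : rf l (j + 1) =
  (l j + cd (l j) j) + (l (j + 2) - cd (l (j + 2)) (j + 2)) - l (j + 1) := by
  simp [rf]

lemma dn_LH {n l} (h : LH (n + 1) l) : LH n (dn n l) := by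
  have z : dn n l 0 = 0 := by
    unfold dn
    split_ifs
    · rfl
    · exact rf_zero h.1
    · exact h.1
  refine ⟨z, ?_, ?_⟩
  · intro i hi
    by_cases hp : (n + 1 + i) % 2 = 0
    · rw [cond_up]
      have e1 : dn n l (i + 1) = l (i + 1) := by
        unfold dn
        rw [if_neg (by omega), if_neg (by omega)]
      rcases i with _ | i
      · rw [z, e1, cd_one]; omega
      have e2 : dn n l (i + 1) = rf l (i + 1) := by
        unfold dn
        rw [if_neg (by omega), if_pos (by omega)]
      rw [e1, e2, rf_succ]
      have a1 := h.low i (by omega)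
      have a2 := h.up (i + 1) (by omega)
      simp only [add_assoc, Nat.reduceAdd] at *
      omega
    · rw [cond_low _ _ _ (fun h' => h' ▸ z)]
      have e1 : dn n l (i + 1) = rf l (i + 1) := by
        unfold dn
        rw [if_neg (by omega), if_pos (by omega)]
      have e2 : dn n l i = l i := by
        unfold dn
        rw [if_neg (by omega), if_neg (by omega)]
      rw [e1, e2, rf_succ]
      have a1 := h.low i (by omega)
      have a2 := h.up (i + 1) (by omega)
      simp only [add_assoc, Nat.reduceAdd] at *
      omega
  · intro i hi
    simp [dn, hi]

lemma upp_LH {n s l} (h : LH n l) : LH (n + 1) (upp n s l) := by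
  have z : upp n s l 0 = 0 := by
    unfold upp
    rw [if_neg (by omega), if_neg (by omega)]
    split_ifs
    · exact rf_zero h.1
    · exact h.1
  refine ⟨z, ?_, ?_⟩
  · intro i hi
    by_cases hp : (n + 1 + i) % 2 = 0
    · rw [cond_up]
      have e1 : upp n s l (i + 1) = l (i + 1) := by
        unfold upp
        rw [if_neg (by omega), if_neg (by omega), if_neg (by omega)]
      rcases i with _ | i
      · rw [z, e1, cd_one]; omega
      have e2 : upp n s l (i + 1) = rf l (i + 1) := by
        unfold upp
        rw [if_neg (by omega), if_neg (by omega), if_pos (by omega)]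
      rw [e1, e2, rf_succ]
      have a1 := h.low i (by omega)
      have a2 := h.up (i + 1) (by omega)
      simp only [add_assoc, Nat.reduceAdd] at *
      omega
    · rw [cond_low _ _ _ (fun h' => h' ▸ z)]
      have e2 : upp n s l i = l i := by
        unfold upp
        rw [if_neg (by omega), if_neg (by omega), if_neg (by omega)]
      by_cases hin : i = n
      · subst hin
        rw [e2]
        have e1 : upp i s l (i + 1) = s + l i + cd (l i) i := by simp [upp]
        rw [e1]; omega
      have e1 : upp n s l (i + 1) = rf l (i + 1) := by
        unfold upp
        rw [if_neg (by omega), if_neg (by omega), if_pos (by omega)]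
      rw [e1, e2, rf_succ]
      have a1 := h.low i (by omega)
      have a2 := h.up (i + 1) (by omega)
      simp only [add_assoc, Nat.reduceAdd] at *
      omega
  · intro i hi
    simp [upp, hi]

lemma upp_dn {n l} (h : LH (n + 1) l) :
    upp n (l (n + 1) - (l n + cd (l n) n)) (dn n l) = l := by
  have hn : dn n l n = l n := by
    unfold dn
    rw [if_neg (by omega), if_neg (by omega)]
  funext j
  unfold upp
  split_ifs with h1 h2 h3
  · exact (h.2.2 j (by omega)).symm
  · subst h2
    rw [hn]
    have := h.low n (by omega)
    omega
  · rcases j with _ | j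
    · rw [rf_zero (dn_LH h).1, h.1]
    have e0 : dn n l j = l j := by
      unfold dn
      rw [if_neg (by omega), if_neg (by omega)]
    have e1 : dn n l (j + 1) = rf l (j + 1) := by
      unfold dn
      rw [if_neg (by omega), if_pos (by omega)]
    have e2 : dn n l (j + 2) = l (j + 2) := by
      unfold dn
      rw [if_neg (by omega), if_neg (by omega)]
    rw [rf_succ, e0, e1, e2, rf_succ]
    have a1 := h.low j (by omega)
    have a2 := h.up (j + 1) (by omega)
    simp only [add_assoc, Nat.reduceAdd] at *
    omega
  · unfold dn
    rw [if_neg (by omega), if_neg (by omega)]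

lemma dn_upp {n s l} (h : LH n l) : dn n (upp n s l) = l := by
  funext j
  unfold dn
  split_ifs with h1 h2
  · exact (h.2.2 j (by omega)).symm
  · rcases j with _ | j
    · rw [rf_zero (upp_LH h).1, h.1]
    have e0 : upp n s l j = l j := by
      unfold upp
      rw [if_neg (by omega), if_neg (by omega), if_neg (by omega)]
    have e1 : upp n s l (j + 1) = rf l (j + 1) := by
      unfold upp
      rw [if_neg (by omega), if_neg (by omega), if_pos (by omega)]
    have e2 : upp n s l (j + 2) = l (j + 2) := by
      unfold upp
      rw [if_neg (by omega), if_neg (by omega), if_neg (by omega)]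
    rw [rf_succ, e0, e1, e2, rf_succ]
    have a1 := h.low j (by omega)
    have a2 := h.up (j + 1) (by omega)
    simp only [add_assoc, Nat.reduceAdd] at *
    omega
  · unfold upp
    rw [if_neg (by omega), if_neg (by omega), if_neg (by omega)]

/-- the step bijection -/
def stepEquiv (n : ℕ) : {l // LH (n + 1) l} ≃ ℕ × {l // LH n l} where
  toFun l := (l.1 (n + 1) - (l.1 n + cd (l.1 n) n), ⟨dn n l.1, dn_LH l.2⟩)
  invFun p := ⟨upp n p.1 p.2.1, upp_LH p.2.2⟩
  left_inv l := Subtype.ext (upp_dn l.2)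
  right_inv p := by
    obtain ⟨s, l, h⟩ := p
    have e1 : upp n s l (n + 1) = s + l n + cd (l n) n := by simp [upp]
    have e2 : upp n s l n = l n := by
      unfold upp
      rw [if_neg (by omega), if_neg (by omega), if_neg (by omega)]
    refine Prod.ext ?_ (Subtype.ext (dn_upp h))
    simp only [e1, e2]
    omega

/-- alternating sums: parts with the parity of the top index, and the others -/
def W (l : ℕ → ℕ) : ℕ → ℕ × ℕ
  | 0 => (l 0, 0)
  | n + 1 => (l (n + 1) + (W l n).2, (W l n).1)

lemma W_sum (l : ℕ → ℕ) (n : ℕ) :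
    (W l n).1 + (W l n).2 = ∑ j ∈ Finset.range (n + 1), l j := by
  induction n with
  | zero => simp [W]
  | succ n ih =>
    rw [Finset.sum_range_succ, ← ih]
    simp only [W]
    omega

lemma W_tele (l m : ℕ → ℕ) (hl : l 0 = 0) (hm : m 0 = 0) (n : ℕ)
    (H : ∀ j, j + 1 ≤ n → (n + j + 1) % 2 = 0 →
      l (j + 1) + m (j + 1) + cd (l (j + 2)) (j + 2) = l j + cd (l j) j + l (j + 2)) :
    (W l n).1 + (W m n).1 + cd (l (n + 1)) (n + 1) = 2 * (W l n).2 + l (n + 1) := by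
  induction n using Nat.strong_induction_on with
  | _ n ih =>
    match n, ih, H with
    | 0, _, _ => simp [W, hl, hm, cd_one]
    | 1, _, H =>
      have := H 0 (by omega) (by omega)
      simp only [hl, cd_zero] at this
      simp [W, hl, hm] at *
      omega
    | n + 2, ih, H =>
      have h1 := ih n (by omega) (fun j hj hp => H j (by omega) (by omega))
      have h2 := H (n + 1) (by omega) (by omega)
      simp only [W, add_assoc, Nat.reduceAdd] at *
      omega

lemma W_congr (l m : ℕ → ℕ) (n : ℕ)
    (H : ∀ j, j ≤ n → (n + j) % 2 = 0 → l j = m j) : (W l n).1 = (W m n).1 := by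
  induction n using Nat.strong_induction_on with
  | _ n ih =>
    match n, ih, H with
    | 0, _, H => exact H 0 le_rfl rfl
    | 1, _, H => simp [W]; exact H 1 le_rfl rfl
    | n + 2, ih, H =>
      have h1 := ih n (by omega) (fun j hj hp => H j (by omega) (by omega))
      have h2 := H (n + 2) (by omega) (by omega)
      simp only [W, add_assoc, Nat.reduceAdd] at *
      omega

lemma W_step {n l} (h : LH (n + 1) l) :
    (W l (n + 1)).1 + (W (dn n l) n).2 =
      (l (n + 1) - (l n + cd (l n) n)) + 2 * (W (dn n l) n).1 ∧
    (W l (n + 1)).2 = (W (dn n l) n).1 := by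
  have c : (W l n).1 = (W (dn n l) n).1 := by
    apply W_congr
    intro j hj hp
    unfold dn
    rw [if_neg (by omega), if_neg (by omega)]
  refine ⟨?_, c⟩
  rw [← c]
  have a := h.low n (by omega)
  rcases n with _ | n
  · have := h.1
    simp [W, this, cd_zero]
  have t := W_tele l (dn (n + 1) l) h.1 (dn_LH h).1 n (by
    intro j hj hp
    have e1 : dn (n + 1) l (j + 1) = rf l (j + 1) := by
      unfold dn
      rw [if_neg (by omega), if_pos (by omega)]
    rw [e1, rf_succ]
    have a1 := h.low j (by omega)
    have a2 := h.up (j + 1) (by omega)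
    simp only [add_assoc, Nat.reduceAdd] at *
    omega)
  simp only [W, add_assoc, Nat.reduceAdd] at *
  omega

lemma LH_main (n : ℕ) : ∃ e : {l // LH n l} ≃ (Fin n → ℕ),
    ∀ l, (W l.1 n).1 = ∑ i : Fin n, ((i : ℕ) + 1) * e l i ∧
      (W l.1 n).2 = ∑ i : Fin n, (i : ℕ) * e l i := by
  induction n with
  | zero =>
    have hz : ∀ l, LH 0 l → l = fun _ => 0 := by
      intro l h
      funext j
      rcases j with _ | j
      · exact h.1
      · exact h.2.2 _ (by omega)
    have : Unique {l // LH 0 l} :=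
      { default := ⟨fun _ => 0, rfl, by simp, by simp⟩
        uniq := fun l => Subtype.ext (hz l.1 l.2) }
    refine ⟨Equiv.ofUnique _ _, ?_⟩
    intro l
    simp [W, l.2.1]
  | succ n ih =>
    obtain ⟨e, he⟩ := ih
    refine ⟨(stepEquiv n).trans (((Equiv.refl ℕ).prodCongr e).trans
      (Fin.consEquiv (fun _ => ℕ))), ?_⟩
    intro l
    have h1 := W_step l.2
    obtain ⟨h2, h3⟩ := he ⟨dn n l.1, dn_LH l.2⟩
    simp only [Fin.sum_univ_succ]
    simp [stepEquiv, Fin.consEquiv]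
    simp only at h2 h3
    set f := e ⟨dn n l.1, dn_LH l.2⟩
    refine ⟨?_, by rw [h1.2, h2]⟩
    have h4 := h1.1
    have h5 : ∑ x : Fin n, ((x : ℕ) + 1 + 1) * f x + ∑ x : Fin n, (x : ℕ) * f x
        = 2 * ∑ x : Fin n, ((x : ℕ) + 1) * f x := by
      rw [← Finset.sum_add_distrib, Finset.mul_sum]
      exact Finset.sum_congr rfl fun x _ => by ring
    omega

/-- multiplicity functions of bounded partitions -/
def BP (n : ℕ) (c : ℕ → ℕ) : Prop :=
  c 0 = 0 ∧ (∀ x ≤ n, c x ≤ 1) ∧ ∀ x > 2 * n, c x = 0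

/-- weight -/
def wt (n : ℕ) (c : ℕ → ℕ) : ℕ := ∑ x ∈ Finset.range (2 * n + 1), x * c x

/-- the step bijection for bounded partitions -/
def bStep (n : ℕ) (hn : 1 ≤ n) : {c // BP (n + 1) c} ≃ {c // BP n c} × ℕ where
  toFun c := (⟨fun x => if x = n + 1 then c.1 (n + 1) + 2 * c.1 (2 * n + 2)
      else if 2 * n < x then 0 else c.1 x, by
    obtain ⟨c, h0, h1, h2⟩ := c
    refine ⟨by simp [h0], ?_, ?_⟩
    · intro x hx
      simp only
      rw [if_neg (by omega), if_neg (by omega)]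
      exact h1 x (by omega)
    · intro x hx
      simp only
      rw [if_neg (by omega), if_pos (by omega)]⟩, c.1 (2 * n + 1))
  invFun p := ⟨fun x => if x = 2 * n + 1 then p.2 else if x = 2 * n + 2 then p.1.1 (n + 1) / 2
      else if x = n + 1 then p.1.1 (n + 1) % 2 else p.1.1 x, by
    obtain ⟨⟨c, h0, h1, h2⟩, a⟩ := p
    refine ⟨by simp [h0], ?_, ?_⟩
    · intro x hx
      simp only
      rw [if_neg (by omega), if_neg (by omega)]
      split_ifs
      · omega
      · exact h1 x (by omega)
    · intro x hx
      simp only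
      rw [if_neg (by omega), if_neg (by omega), if_neg (by omega)]
      exact h2 x (by omega)⟩
  left_inv c := by
    obtain ⟨c, h0, h1, h2⟩ := c
    apply Subtype.ext
    funext x
    have := h1 (n + 1) le_rfl
    simp only [if_true]
    split_ifs with h3 h4 h5 h6
    · rw [h3]
    · rw [h4]; omega
    · rw [h5]; omega
    · exact (h2 x (by omega)).symm
    · rfl
  right_inv p := by
    obtain ⟨⟨c, h0, h1, h2⟩, a⟩ := p
    refine Prod.ext (Subtype.ext ?_) (by simp)
    funext x
    simp only [if_true]
    by_cases hx : x = n + 1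
    · subst hx
      rw [if_pos rfl, if_neg (by omega), if_neg (by omega), if_neg (by omega)]
      omega
    · rw [if_neg hx]
      split_ifs with h3 h4 h5
      · exact (h2 x (by omega)).symm
      · omega
      · omega
      · rfl

lemma bStep_wt (n : ℕ) (hn : 1 ≤ n) (c : {c // BP (n + 1) c}) :
    wt (n + 1) c.1 = wt n (bStep n hn c).1.1 + (2 * n + 1) * (bStep n hn c).2 := by
  have e : wt n (bStep n hn c).1.1 = wt n c.1 + (2 * n + 2) * c.1 (2 * n + 2) := by
    unfold wt
    have : ∀ x ∈ Finset.range (2 * n + 1), x * (bStep n hn c).1.1 x =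
        x * c.1 x + if x = n + 1 then (2 * n + 2) * c.1 (2 * n + 2) else 0 := by
      intro x hx
      rw [Finset.mem_range] at hx
      simp only [bStep, Equiv.coe_fn_mk]
      split_ifs with h1 h2
      · subst h1; ring
      · omega
      · rfl
    rw [Finset.sum_congr rfl this, Finset.sum_add_distrib, Finset.sum_ite_eq', if_pos]
    rw [Finset.mem_range]; omega
  rw [e]
  have : (bStep n hn c).2 = c.1 (2 * n + 1) := rfl
  rw [this]
  unfold wt
  rw [show 2 * (n + 1) + 1 = 2 * n + 1 + 1 + 1 by ring, Finset.sum_range_succ,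
    Finset.sum_range_succ]
  ring

/-- base case -/
def bBase : {c // BP 1 c} ≃ (Fin 1 → ℕ) where
  toFun c := fun _ => c.1 1 + 2 * c.1 2
  invFun f := ⟨fun x => if x = 1 then f 0 % 2 else if x = 2 then f 0 / 2 else 0, by
    refine ⟨by simp, ?_, ?_⟩
    · intro x hx
      simp only
      split_ifs <;> omega
    · intro x hx
      simp only
      rw [if_neg (by omega), if_neg (by omega)]⟩
  left_inv c := by
    obtain ⟨c, h0, h1, h2⟩ := c
    apply Subtype.ext
    funext x
    have := h1 1 le_rfl
    simp only
    split_ifs with h3 h4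
    · rw [h3]; omega
    · rw [h4]; omega
    · rcases Nat.eq_zero_or_pos x with h | h
      · rw [h, h0]
      · exact (h2 x (by omega)).symm
  right_inv f := by
    funext i
    rw [Subsingleton.elim i 0]
    simp
    omega

lemma BP_main (n : ℕ) (hn : 1 ≤ n) : ∃ e : {c // BP n c} ≃ (Fin n → ℕ),
    ∀ c, wt n c.1 = ∑ i : Fin n, (2 * (i : ℕ) + 1) * e c i := by
  induction n, hn using Nat.le_induction with
  | base =>
    refine ⟨bBase, ?_⟩
    intro c
    simp [bBase, wt, Finset.sum_range_succ]
  | succ n hn ih =>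
    obtain ⟨e, he⟩ := ih
    let g : (Fin n → ℕ) × ℕ ≃ (Fin (n + 1) → ℕ) :=
      (Equiv.prodComm _ _).trans (Fin.snocEquiv (fun _ => ℕ))
    refine ⟨(bStep n hn).trans ((e.prodCongr (Equiv.refl ℕ)).trans g), ?_⟩
    intro c
    rw [bStep_wt n hn c, he, Fin.sum_univ_castSucc]
    simp [g, Fin.snocEquiv]

/-- extension of a finite sequence to `ℕ`, shifted by one -/
def ext1 (n : ℕ) (l : Fin n → ℕ) (j : ℕ) : ℕ :=
  if h : 0 < j ∧ j ≤ n then l ⟨j - 1, by omega⟩ else 0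

lemma ext1_succ (n : ℕ) (l : Fin n → ℕ) (i : Fin n) : ext1 n l (i + 1) = l i := by
  unfold ext1
  rw [dif_pos ⟨by omega, by omega⟩]
  rfl

lemma LH_mono {n l} (h : LH n l) (i j : ℕ) (hij : i ≤ j) (hj : j < n) :
    (l (i + 1) : ℚ) / ((i : ℕ) + 1) ≤ (l (j + 1) : ℚ) / ((j : ℕ) + 1) := by
  induction j, hij using Nat.le_induction with
  | base => exact le_rfl
  | succ j hij ih =>
    refine (ih (by omega)).trans ?_
    have := h.2.1 (j + 1) (by omega)
    rw [div_le_div_iff₀ (by positivity) (by positivity)]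
    exact_mod_cast this

/-- the frozen left side in terms of `LH` -/
def lhEquiv (n m : ℕ) : {l : Fin n → ℕ //
        (∀ i j : Fin n, i ≤ j → (l i : ℚ) / ((i : ℕ) + 1) ≤ (l j : ℚ) / ((j : ℕ) + 1)) ∧
        ∑ i, l i = m} ≃ {l : {l // LH n l} // ∑ j ∈ Finset.range (n + 1), l.1 j = m} where
  toFun l := ⟨⟨ext1 n l.1, by
    obtain ⟨l, h, -⟩ := l
    refine ⟨by simp [ext1], ?_, ?_⟩
    · intro i hi
      rcases i with _ | i
      · simp [ext1]
      have := h ⟨i, by omega⟩ ⟨i + 1, hi⟩ (by simp)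
      rw [div_le_div_iff₀ (by positivity) (by positivity)] at this
      have e1 := ext1_succ n l ⟨i, by omega⟩
      have e2 := ext1_succ n l ⟨i + 1, hi⟩
      simp only at e1 e2 this
      rw [e1, e2]
      exact_mod_cast this
    · intro i hi
      unfold ext1
      rw [dif_neg (by omega)]⟩, by
    obtain ⟨l, h, hs⟩ := l
    rw [Finset.sum_range_succ', Finset.sum_range]
    simp only [ext1_succ]
    simpa [ext1] using hs⟩
  invFun l := ⟨fun i => l.1.1 (i + 1), by
    obtain ⟨⟨l, h⟩, hs⟩ := l
    refine ⟨?_, ?_⟩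
    · intro i j hij
      exact LH_mono h i j hij j.2
    · simp only at hs
      rw [Finset.sum_range_succ', Finset.sum_range, h.1] at hs
      simpa using hs⟩
  left_inv l := by
    apply Subtype.ext
    funext i
    exact ext1_succ n l.1 i
  right_inv l := by
    obtain ⟨⟨l, h⟩, hs⟩ := l
    apply Subtype.ext
    apply Subtype.ext
    funext j
    simp only [ext1]
    split_ifs with hj
    · congr 1; omega
    · rcases Nat.eq_zero_or_pos j with h' | h'
      · rw [h', h.1]
      · exact (h.2.2 j (by omega)).symm

lemma sum_count (n : ℕ) (s : Multiset ℕ) (h : ∀ x ∈ s, x ≤ 2 * n) :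
    wt n (fun x => s.count x) = s.sum := by
  rw [Finset.sum_multiset_count_of_subset s (Finset.range (2 * n + 1))]
  · simp [wt, mul_comm]
  · intro x hx
    have := h x (by simpa using hx)
    simp; omega

lemma count_build (n : ℕ) (c : ℕ → ℕ) (h : ∀ x > 2 * n, c x = 0) (x : ℕ) :
    (∑ y ∈ Finset.range (2 * n + 1), Multiset.replicate (c y) y).count x = c x := by
  rw [Multiset.count_sum']
  simp only [Multiset.count_replicate]
  rw [Finset.sum_ite_eq']
  split_ifs with hx
  · rfl
  · exact (h x (by simp at hx; omega)).symm

/-- the frozen right side in terms of `BP` -/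
def bpEquiv (n m : ℕ) : {p : Nat.Partition m //
        (∀ x ∈ p.parts, x ≤ 2 * n) ∧ (∀ x ∈ p.parts, x ≤ n → p.parts.count x ≤ 1)} ≃
      {c : {c // BP n c} // wt n c.1 = m} where
  toFun p := ⟨⟨fun x => p.1.parts.count x, by
    obtain ⟨p, h1, h2⟩ := p
    refine ⟨?_, ?_, ?_⟩
    · exact Multiset.count_eq_zero.2 fun h => absurd (p.parts_pos h) (by omega)
    · intro x hx
      by_cases hm : x ∈ p.parts
      · exact h2 x hm hx
      · simp only
        rw [Multiset.count_eq_zero.2 hm]; omega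
    · intro x hx
      exact Multiset.count_eq_zero.2 fun h => absurd (h1 x h) (by omega)⟩, by
    simp only
    rw [sum_count n _ p.2.1, p.1.parts_sum]⟩
  invFun c := ⟨⟨∑ y ∈ Finset.range (2 * n + 1), Multiset.replicate (c.1.1 y) y, by
      intro i hi
      have h1 := Multiset.count_pos.2 hi
      rw [count_build n c.1.1 c.1.2.2.2] at h1
      have h0 := c.1.2.1
      rcases Nat.eq_zero_or_pos i with h' | h'
      · subst h'; omega
      · exact h', by
      have := c.2
      refine Eq.trans ?_ this
      rw [Multiset.sum_sum]
      simp [wt, mul_comm]⟩, by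
    refine ⟨?_, ?_⟩
    · intro x hx
      have h1 := Multiset.count_pos.2 hx
      rw [count_build n c.1.1 c.1.2.2.2] at h1
      by_contra hc
      have := c.1.2.2.2 x (by omega)
      omega
    · intro x _ hx
      rw [count_build n c.1.1 c.1.2.2.2]
      exact c.1.2.2.1 x hx⟩
  left_inv p := by
    apply Subtype.ext
    apply Nat.Partition.ext
    ext x
    refine count_build n _ ?_ x
    intro x hx
    exact Multiset.count_eq_zero.2 fun h => absurd (p.2.1 x h) (by omega)
  right_inv c := by
    apply Subtype.ext
    apply Subtype.ext
    funext x
    exact count_build n c.1.1 c.1.2.2.2 x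

/-- For every `n ≥ 1` and `m ≥ 0`, the number of lecture hall partitions
of length `n` with sum `m` equals the number of bounded partitions relative to `n`
with sum `m`. -/
theorem lecture_hall_eq_bounded_count (n m : ℕ) (hn : 1 ≤ n) :
    Nat.card {l : Fin n → ℕ //
        (∀ i j : Fin n, i ≤ j → (l i : ℚ) / ((i : ℕ) + 1) ≤ (l j : ℚ) / ((j : ℕ) + 1)) ∧
        ∑ i, l i = m} =
    Nat.card {p : Nat.Partition m //
        (∀ x ∈ p.parts, x ≤ 2 * n) ∧ (∀ x ∈ p.parts, x ≤ n → p.parts.count x ≤ 1)} := by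
  obtain ⟨e, he⟩ := LH_main n
  obtain ⟨f, hf⟩ := BP_main n hn
  refine Nat.card_congr ((lhEquiv n m).trans (Equiv.trans ?_ (bpEquiv n m).symm))
  refine (e.trans f.symm).subtypeEquiv ?_
  intro l
  rw [hf, ← W_sum, (he l).1, (he l).2, ← Finset.sum_add_distrib]
  simp only [Equiv.trans_apply, Equiv.apply_symm_apply]
  rw [Finset.sum_congr rfl fun (i : Fin n) _ => show ((i : ℕ) + 1) * e l i + (i : ℕ) * e l i =
    (2 * (i : ℕ) + 1) * e l i by ring]
end
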